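/- Let n ≥ 1, let θ be a bounded measurable function supported in Q = (-1/2,1/2)^n with ∫θ = 1, and let ω : ℝ^n → [0,∞) be a radial nonincreasing function (ω(x) = w(|x|) with w nonincreasing) satisfying ∫_{ℝ^n} ω(x)/(1+|x|)^{n+1} dx < ∞. Define Ω(R) = ∫_{Q} ω(y) dy + ∫_{1<|y|<R} ω(y)/|y|^n dy for R ≥ 0. Let (λ_j)_{j∈ℤ^n} be real numbers with ∑_j |λ_j| < ∞ and set g = ∑_{j∈ℤ^n} λ_j (χ_{Q_j} − θ). (i) If ∑_{j∈ℤ^n} |λ_j| Ω(|j|) < ∞ then ∫_{ℝ^n} 𝓜_φ g(x) ω(x) dx < ∞ for every smooth φ supported in the closed unit ball with ∫φ = 1. (ii) Conversely, if all λ_j are nonnegative and ∫_{ℝ^n} 𝓜_φ g(x) ω(x) dx < ∞ for every such φ, then ∑_{j∈ℤ^n} λ_j Ω(|j|) < ∞. -/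

import Mathlib

open MeasureTheory Real Set Metric ENNReal

noncomputable section

/-- `ℝ^n` with the Euclidean norm. -/
abbrev En (n : ℕ) := EuclideanSpace ℝ (Fin n)

/-- `ln₊ t = max (ln t) 0`. -/
def lnp (t : ℝ) : ℝ := max (Real.log t) 0

/-- The unit cube `Q = (-1/2, 1/2)^n`. -/
def unitQ (n : ℕ) : Set (En n) := {x | ∀ i, -(1/2 : ℝ) < x i ∧ x i < 1/2}

/-- The dilate `φ_t(y) = t^{-n} φ(y/t)` convolved with `f` at `x`:
`(φ_t ∗ f)(x) = ∫ t^{-n} φ((x-y)/t) f(y) dy`. -/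
def phiConv (n : ℕ) (φ f : En n → ℝ) (t : ℝ) (x : En n) : ℝ :=
  ∫ y, (t ^ n)⁻¹ * φ (t⁻¹ • (x - y)) * f y

/-- The maximal function `𝓜_φ f(x) = sup_{t>0} |(φ_t ∗ f)(x)|`. -/
def Mphi (n : ℕ) (φ f : En n → ℝ) (x : En n) : ℝ :=
  ⨆ t : {t : ℝ // 0 < t}, |phiConv n φ f t.1 x|

/-- A smooth function supported in the closed unit ball with integral `1`. -/
def IsTestFun (n : ℕ) (φ : En n → ℝ) : Prop :=
  ContDiff ℝ (⊤ : ℕ∞) φ ∧ (∀ x, x ∉ Metric.closedBall (0 : En n) 1 → φ x = 0) ∧ (∫ x, φ x) = 1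

/-- Membership in the Hardy space `H^1(ℝ^n)`: the maximal function `𝓜_φ f` is
integrable for every admissible `φ`. -/
def MemH1 (n : ℕ) (f : En n → ℝ) : Prop :=
  ∀ φ : En n → ℝ, IsTestFun n φ → Integrable (Mphi n φ f)

/-- The cube `Q_k = k + Q` for `k ∈ ℤ^n`. -/
def Qk (n : ℕ) (k : Fin n → ℤ) : Set (En n) :=
  {x | ∀ i, (k i : ℝ) - 1/2 < x i ∧ x i < (k i : ℝ) + 1/2}

/-- The lattice point `k ∈ ℤ^n` viewed as a point of `ℝ^n`. -/
def zv (n : ℕ) (k : Fin n → ℤ) : En n :=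
  (EuclideanSpace.equiv (Fin n) ℝ).symm (fun i => (k i : ℝ))

/-- `μ_k = ‖f_k‖_{L^1} = ∫_{Q_k} |f|`. -/
def muk (n : ℕ) (f : En n → ℝ) (k : Fin n → ℤ) : ℝ := ∫ x in Qk n k, |f x|

/-- The local Hardy–Littlewood maximal function
`M^loc f(x) = sup_{0<r<1} r^{-n} ∫_{|y-x|<r} |f(y)| dy`. -/
def Mloc (n : ℕ) (f : En n → ℝ) (x : En n) : ℝ :=
  ⨆ r : Set.Ioo (0 : ℝ) 1, ((r : ℝ) ^ n)⁻¹ * ∫ y in Metric.ball x (r : ℝ), |f y|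

/-- The function `Ω(R) = ∫_Q ω + ∫_{1<|y|<R} ω(y)/|y|^n dy`. -/
def OmegaFun (n : ℕ) (ω : En n → ℝ) (R : ℝ) : ℝ :=
  (∫ y in unitQ n, ω y) + ∫ y in {y : En n | 1 < ‖y‖ ∧ ‖y‖ < R}, ω y / ‖y‖ ^ n

/-!
Only the size of `χ_{Q_j}` and `θ`, their support in a ball of fixed radius `s` about `j` and `0`,
and their integral matter. The maximal function of a single bump at `p` decays like
`(s + |x - p|)^{-n}`. For the difference of bumps at `p` and `0` this is all one has up to
`|x| ≈ |p|`; farther out the cancellation gives `|p| / |x|^{n+1}`, of which the integral does not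
depend on `p`. As `ω` is radially nonincreasing, the decay about `p` is controlled by the one about
`0`, so that integrating against `ω` yields `O(Ω(|p|) + 1)`, which is summed over `j`.

Conversely, let `φ ≤ c` with equality on the ball of radius `1/2`, and take `t = 2 (|x| + s)`. Then
`φ_t(x - ·)` attains its maximum on the support of `θ`, so every term of `-φ_t ∗ g (x)` is
nonnegative, and the bumps at `|p| > 3 (1 + s) |x|` are out of reach of `φ_t(x - ·)` and contribute
their full `λ c / t^n ≈ λ / |x|^n`. Integrating against `ω` gives `λ Ω(|p| / (3 (1 + s)))`, and
scaling the argument of `Ω` changes it by a bounded amount only.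
-/

open Module (finrank)
open scoped NNReal

/-- A nonnegative radially nonincreasing function on a normed space. The profile `w` with
`ω x = w ‖x‖` is left implicit: monotonicity with respect to the norm already makes `ω` radial. -/
structure IsRadialWeight {E : Type*} [NormedAddCommGroup E] (ω : E → ℝ) : Prop where
  nonneg : ∀ x, 0 ≤ ω x
  anti : ∀ ⦃x y⦄, ‖x‖ ≤ ‖y‖ → ω y ≤ ω x

/-- The open annulus `1 < |y| < R` of the definition of `Ω(R)`. -/
def annulus (E : Type*) [NormedAddCommGroup E] (R : ℝ) : Set E := {y | 1 < ‖y‖ ∧ ‖y‖ < R}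

section Weight

variable {E : Type*} [NormedAddCommGroup E] {ω : E → ℝ}

lemma annulus_max_one (R : ℝ) : annulus E (max 1 R) = annulus E R := by
  ext y
  exact and_congr_right fun hy => by simp [hy.not_gt]

lemma IsRadialWeight.of_antitoneOn {w : ℝ → ℝ} (hω₀ : ∀ x, 0 ≤ ω x) (hrad : ∀ x, ω x = w ‖x‖)
    (hw : AntitoneOn w (Ici 0)) : IsRadialWeight ω where
  nonneg := hω₀
  anti x y h := by
    rw [hrad, hrad]
    exact hw (norm_nonneg x) (norm_nonneg y) h

lemma IsRadialWeight.le_apply_zero (hω : IsRadialWeight ω) (x : E) : ω x ≤ ω 0 :=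
  hω.anti (by simp)

lemma IsRadialWeight.div_add_norm_sub_pow_le (hω : IsRadialWeight ω) {s : ℝ} (hs : 0 < s) (n : ℕ)
    (x p : E) :
    ω x / (s + ‖x - p‖) ^ n ≤ ω x / (s + ‖x‖) ^ n + ω (x - p) / (s + ‖x - p‖) ^ n := by
  have hx := hω.nonneg x
  have hxp := hω.nonneg (x - p)
  rcases le_total ‖x‖ ‖x - p‖ with h | h
  · refine le_add_of_le_of_nonneg ?_ (by positivity)
    gcongr
  · refine le_add_of_nonneg_of_le (by positivity) ?_
    gcongr
    exact hω.anti h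

variable [MeasurableSpace E] [OpensMeasurableSpace E]

lemma measurableSet_annulus (R : ℝ) : MeasurableSet (annulus E R) :=
  (measurableSet_lt measurable_const measurable_norm).inter
    (measurableSet_lt measurable_norm measurable_const)

lemma IsRadialWeight.measurable (hω : IsRadialWeight ω) : Measurable ω := by
  refine measurable_of_Ioi fun a => ?_
  have hlower : IsLowerSet {r | ∃ y, a < ω y ∧ r ≤ ‖y‖} :=
    fun _ _ hr ⟨y, hy, hle⟩ => ⟨y, hy, hr.trans hle⟩
  have heq : ω ⁻¹' Ioi a = norm ⁻¹' {r | ∃ y, a < ω y ∧ r ≤ ‖y‖} := by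
    ext x
    exact ⟨fun hx => ⟨x, hx, le_rfl⟩, fun ⟨y, hy, hle⟩ => hy.trans_le (hω.anti hle)⟩
  rw [heq]
  exact measurable_norm hlower.ordConnected.measurableSet

end Weight

section Haar

variable {E : Type*} [NormedAddCommGroup E] [NormedSpace ℝ E] [MeasurableSpace E]

/-- The logarithmic part `∫_{1<|y|<R} ω(y)/|y|^d dμ` of `Ω(R)`, where `d = dim E`, as an extended
nonnegative real. -/
def annulusLIntegral (μ : Measure E) (ω : E → ℝ) (R : ℝ) : ℝ≥0∞ :=
  ∫⁻ y in annulus E R, ENNReal.ofReal (ω y / ‖y‖ ^ finrank ℝ E) ∂μ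

/-- The weight `ω` times the decay `(s + |x|)^{-d}` of the maximal function of a bump, cut off
to the ball of radius `r`. -/
def truncWeight (s : ℝ) (ω : E → ℝ) (r : ℝ) : E → ℝ≥0∞ :=
  (ball 0 r).indicator fun x => ENNReal.ofReal (ω x / (s + ‖x‖) ^ finrank ℝ E)

/-- A majorant, up to a constant, of `𝓜_φ a · ω` when `a` is the difference of a bump of radius `s`
at `p` and one at `0`. Up to distance `2 (|p| + s)` each of the two bumps contributes its own
decay, beyond it their cancellation does. -/
def atomMajorant (s : ℝ) (ω : E → ℝ) (p x : E) : ℝ≥0∞ :=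
  truncWeight s ω (3 * (‖p‖ + s)) x + truncWeight s ω (3 * (‖p‖ + s)) (x - p) +
    ENNReal.ofReal ((‖p‖ + s) / (‖p‖ + s + ‖x‖) ^ (finrank ℝ E + 1))

variable [BorelSpace E] {ω : E → ℝ}

lemma measurable_truncWeight (hω : IsRadialWeight ω) (s r : ℝ) :
    Measurable (truncWeight s ω r) := by
  have := hω.measurable
  exact Measurable.indicator (by fun_prop) measurableSet_ball

lemma measurable_atomMajorant (hω : IsRadialWeight ω) (s : ℝ) (p : E) :
    Measurable (atomMajorant s ω p) := by
  have := measurable_truncWeight hω s (3 * (‖p‖ + s))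
  unfold atomMajorant
  fun_prop

variable (μ : Measure E)

lemma lintegral_truncWeight_le (hω : IsRadialWeight ω) {s : ℝ} (hs : 0 < s) (r : ℝ) :
    ∫⁻ x, truncWeight s ω r x ∂μ ≤
      ENNReal.ofReal (ω 0 / s ^ finrank ℝ E) * μ (closedBall 0 1) + annulusLIntegral μ ω r := by
  set d := finrank ℝ E
  have hω0 := hω.nonneg 0
  have hsub : ball (0 : E) r ⊆ closedBall 0 1 ∪ annulus E r := by
    intro x hx
    rcases le_or_gt ‖x‖ 1 with h | h
    · exact .inl (by simpa using h)
    · exact .inr ⟨h, by simpa using hx⟩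
  rw [truncWeight, lintegral_indicator measurableSet_ball]
  refine ((lintegral_mono_set hsub).trans (lintegral_union_le _ _ _)).trans (add_le_add ?_ ?_)
  · rw [← setLIntegral_const]
    refine setLIntegral_mono measurable_const fun x _ => ENNReal.ofReal_le_ofReal ?_
    gcongr
    · exact hω.le_apply_zero x
    · simp
  · refine setLIntegral_mono' (measurableSet_annulus r) fun x hx => ENNReal.ofReal_le_ofReal ?_
    have := hω.nonneg x
    have : 0 < ‖x‖ := one_pos.trans hx.1
    gcongr
    linarith

variable [FiniteDimensional ℝ E] [μ.IsAddHaarMeasure]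

lemma annulusLIntegral_mul_le (hω : IsRadialWeight ω) {B R : ℝ} (hB : 0 ≤ B) (hR : 0 ≤ R) :
    annulusLIntegral μ ω (B * R) ≤
      annulusLIntegral μ ω R + ENNReal.ofReal (ω 0 * B ^ finrank ℝ E) * μ (ball 0 1) := by
  rcases hR.eq_or_lt with rfl | hR
  · simp [annulusLIntegral]
  have hω0 := hω.nonneg 0
  have hsub : annulus E (B * R) ⊆ annulus E R ∪ (closedBall 0 (B * R) \ ball 0 R) := by
    rintro y ⟨h1, hB⟩
    rcases lt_or_ge ‖y‖ R with h | h
    · exact .inl ⟨h1, h⟩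
    · exact .inr ⟨by simpa using hB.le, by simpa using h⟩
  have hshell : ∀ y ∈ closedBall (0 : E) (B * R) \ ball 0 R,
      ENNReal.ofReal (ω y / ‖y‖ ^ finrank ℝ E) ≤ ENNReal.ofReal (ω 0 / R ^ finrank ℝ E) := by
    rintro y ⟨-, hy⟩
    have hy : R ≤ ‖y‖ := by simpa using hy
    gcongr
    exact hω.le_apply_zero y
  calc annulusLIntegral μ ω (B * R)
      ≤ annulusLIntegral μ ω R +
          ∫⁻ y in closedBall 0 (B * R) \ ball 0 R, ENNReal.ofReal (ω y / ‖y‖ ^ finrank ℝ E) ∂μ :=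
        (lintegral_mono_set hsub).trans (lintegral_union_le _ _ _)
    _ ≤ annulusLIntegral μ ω R +
          ENNReal.ofReal (ω 0 / R ^ finrank ℝ E) * μ (closedBall 0 (B * R)) := by
        gcongr
        refine (setLIntegral_mono measurable_const hshell).trans ?_
        rw [setLIntegral_const]
        gcongr
        exact sdiff_subset
    _ = _ := by
        rw [μ.addHaar_closedBall _ (by positivity), ← mul_assoc,
          ← ENNReal.ofReal_mul (by positivity), mul_pow]
        congr 3
        field_simp

lemma exists_lintegral_truncWeight_le (hω : IsRadialWeight ω) {s : ℝ} (hs : 0 < s) :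
    ∃ T < ∞, ∀ p : E,
      ∫⁻ x, truncWeight s ω (3 * (‖p‖ + s)) x ∂μ ≤ annulusLIntegral μ ω ‖p‖ + T := by
  set d := finrank ℝ E
  set B := 3 * (1 + s)
  refine ⟨ENNReal.ofReal (ω 0 * B ^ d) * μ (ball 0 1) +
    ENNReal.ofReal (ω 0 / s ^ d) * μ (closedBall 0 1), ?_, fun p => ?_⟩
  · exact ENNReal.add_lt_top.2 ⟨ENNReal.mul_lt_top ENNReal.ofReal_lt_top measure_ball_lt_top,
      ENNReal.mul_lt_top ENNReal.ofReal_lt_top measure_closedBall_lt_top⟩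
  have hradius : 3 * (‖p‖ + s) ≤ B * max 1 ‖p‖ := by
    simp only [B]
    nlinarith [le_max_left 1 ‖p‖, le_max_right 1 ‖p‖]
  have hannulus : annulus E (3 * (‖p‖ + s)) ⊆ annulus E (B * max 1 ‖p‖) :=
    fun y hy => ⟨hy.1, hy.2.trans_le hradius⟩
  calc ∫⁻ x, truncWeight s ω (3 * (‖p‖ + s)) x ∂μ
      ≤ ENNReal.ofReal (ω 0 / s ^ d) * μ (closedBall 0 1) +
          annulusLIntegral μ ω (3 * (‖p‖ + s)) := lintegral_truncWeight_le μ hω hs _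
    _ ≤ ENNReal.ofReal (ω 0 / s ^ d) * μ (closedBall 0 1) +
          annulusLIntegral μ ω (B * max 1 ‖p‖) := by
        gcongr
        exact lintegral_mono_set hannulus
    _ ≤ ENNReal.ofReal (ω 0 / s ^ d) * μ (closedBall 0 1) +
          (annulusLIntegral μ ω (max 1 ‖p‖) + ENNReal.ofReal (ω 0 * B ^ d) * μ (ball 0 1)) := by
        gcongr
        exact annulusLIntegral_mul_le μ hω (by positivity) (by positivity)
    _ = _ := by
        rw [annulusLIntegral, annulus_max_one, ← annulusLIntegral]
        ring

lemma lintegral_comp_inv_smul {f : E → ℝ≥0∞} (hf : Measurable f) {R : ℝ} (hR : 0 < R) :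
    ∫⁻ x, f (R⁻¹ • x) ∂μ = ENNReal.ofReal (R ^ finrank ℝ E) * ∫⁻ x, f x ∂μ := by
  have hmap : μ.map (R⁻¹ • ·) = ENNReal.ofReal (R ^ finrank ℝ E) • μ := by
    rw [μ.map_addHaar_smul (by positivity), inv_pow, inv_inv, abs_of_pos (by positivity)]
  rw [← lintegral_map hf (measurable_const_smul _), hmap, lintegral_smul_measure, smul_eq_mul]

lemma lintegral_one_add_norm_pow_lt_top :
    ∫⁻ x : E, ENNReal.ofReal ((1 + ‖x‖) ^ (finrank ℝ E + 1))⁻¹ ∂μ < ∞ := by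
  have h := finite_integral_one_add_norm (μ := μ) (r := (finrank ℝ E + 1 : ℕ)) (by simp)
  have hpow (x : E) : (1 + ‖x‖) ^ (-(finrank ℝ E + 1 : ℕ) : ℝ) =
      ((1 + ‖x‖) ^ (finrank ℝ E + 1))⁻¹ := by
    rw [Real.rpow_neg (by positivity), Real.rpow_natCast]
  simpa only [hpow] using h

lemma lintegral_div_add_norm_pow {R : ℝ} (hR : 0 < R) :
    ∫⁻ x : E, ENNReal.ofReal (R / (R + ‖x‖) ^ (finrank ℝ E + 1)) ∂μ =
      ∫⁻ x : E, ENNReal.ofReal ((1 + ‖x‖) ^ (finrank ℝ E + 1))⁻¹ ∂μ := by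
  set d := finrank ℝ E
  have hpt (x : E) : ENNReal.ofReal ((1 + ‖R⁻¹ • x‖) ^ (d + 1))⁻¹ =
      ENNReal.ofReal (R ^ d) * ENNReal.ofReal (R / (R + ‖x‖) ^ (d + 1)) := by
    rw [← ENNReal.ofReal_mul (by positivity), norm_smul, norm_inv, Real.norm_of_nonneg hR.le,
      ← mul_div_assoc, ← pow_succ, ← div_pow, ← inv_pow]
    congr 2
    field_simp
  have hscale := lintegral_comp_inv_smul μ
    (f := fun x : E => ENNReal.ofReal ((1 + ‖x‖) ^ (d + 1))⁻¹) (by fun_prop) hR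
  simp only [hpt] at hscale
  rw [lintegral_const_mul _ (by fun_prop)] at hscale
  exact (ENNReal.mul_right_inj (by simpa using pow_pos hR d) ENNReal.ofReal_ne_top).1 hscale

lemma exists_lintegral_atomMajorant_le (hω : IsRadialWeight ω) {s : ℝ} (hs : 0 < s) :
    ∃ T < ∞, ∀ p : E, ∫⁻ x, atomMajorant s ω p x ∂μ ≤ 2 * annulusLIntegral μ ω ‖p‖ + T := by
  obtain ⟨T, hT, hle⟩ := exists_lintegral_truncWeight_le μ hω hs
  refine ⟨2 * T + ∫⁻ x : E, ENNReal.ofReal ((1 + ‖x‖) ^ (finrank ℝ E + 1))⁻¹ ∂μ, ?_,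
    fun p => ?_⟩
  · exact ENNReal.add_lt_top.2
      ⟨ENNReal.mul_lt_top (by simp) hT, lintegral_one_add_norm_pow_lt_top μ⟩
  have hmeas := measurable_truncWeight hω s (3 * (‖p‖ + s))
  unfold atomMajorant
  rw [lintegral_add_right _ (by fun_prop), lintegral_add_left hmeas,
    lintegral_sub_right_eq_self (truncWeight s ω _), ← two_mul,
    lintegral_div_add_norm_pow μ (by positivity), ← add_assoc, ← mul_add]
  gcongr
  exact hle p

end Haar

section Convolution

lemma abs_integral_mul_le_mul_integral_abs {α : Type*} [MeasurableSpace α] {μ : Measure α}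
    {k f : α → ℝ} {B : ℝ} (hf : Integrable f μ) (hk : ∀ y, f y ≠ 0 → |k y| ≤ B) :
    |∫ y, k y * f y ∂μ| ≤ B * ∫ y, |f y| ∂μ := by
  rw [← integral_const_mul, ← Real.norm_eq_abs]
  refine norm_integral_le_of_norm_le (hf.abs.const_mul B) (.of_forall fun y => ?_)
  rw [norm_mul, Real.norm_eq_abs, Real.norm_eq_abs]
  by_cases hy : f y = 0
  · simp [hy]
  · gcongr
    exact hk y hy

variable {n : ℕ} {φ f : En n → ℝ} {t : ℝ} {x : En n}

/-- The dilate `φ_t(z) = t^{-n} φ(z/t)`, so that `phiConv n φ f t x = ∫ φ_t(x - y) f(y) dy` holds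
by definition. -/
def dilate (φ : En n → ℝ) (t : ℝ) (z : En n) : ℝ := (t ^ n)⁻¹ * φ (t⁻¹ • z)

lemma phiConv_eq_integral_dilate : phiConv n φ f t x = ∫ y, dilate φ t (x - y) * f y := rfl

lemma dilate_eq_zero (hφ : ∀ z, 1 < ‖z‖ → φ z = 0) (ht : 0 < t) {z : En n} (hz : t < ‖z‖) :
    dilate φ t z = 0 := by
  have hz' : 1 < ‖t⁻¹ • z‖ := by
    rwa [norm_smul, norm_inv, Real.norm_of_nonneg ht.le, ← div_eq_inv_mul, one_lt_div ht]
  rw [dilate, hφ _ hz', mul_zero]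

lemma abs_dilate_le (hφ : ∀ z, 1 < ‖z‖ → φ z = 0) {M : ℝ} (hM : ∀ z, |φ z| ≤ M) (ht : 0 < t)
    {r : ℝ} (hr : 0 < r) {z : En n} (hz : r ≤ ‖z‖) : |dilate φ t z| ≤ M / r ^ n := by
  have hM0 : 0 ≤ M := (abs_nonneg _).trans (hM 0)
  rcases lt_or_ge t r with h | h
  · rw [dilate_eq_zero hφ ht (h.trans_le hz), abs_zero]
    positivity
  · rw [dilate, abs_mul, abs_of_pos (by positivity), inv_mul_eq_div]
    gcongr
    exact hM _

lemma abs_dilate_sub_le (hφ : ∀ z, 1 < ‖z‖ → φ z = 0) {L : ℝ≥0} (hL : LipschitzWith L φ)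
    (ht : 0 < t) {r : ℝ} (hr : 0 < r) {z z' : En n} (hz : r ≤ ‖z‖) (hz' : r ≤ ‖z'‖) :
    |dilate φ t z - dilate φ t z'| ≤ L * ‖z - z'‖ / r ^ (n + 1) := by
  rcases lt_or_ge t r with h | h
  · rw [dilate_eq_zero hφ ht (h.trans_le hz), dilate_eq_zero hφ ht (h.trans_le hz'), sub_zero,
      abs_zero]
    positivity
  have hlip : |φ (t⁻¹ • z) - φ (t⁻¹ • z')| ≤ L * (t⁻¹ * ‖z - z'‖) := by
    have := hL.dist_le_mul (t⁻¹ • z) (t⁻¹ • z')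
    rwa [dist_smul₀, norm_inv, Real.norm_of_nonneg ht.le, Real.dist_eq, dist_eq_norm] at this
  calc |dilate φ t z - dilate φ t z'|
      = (t ^ n)⁻¹ * |φ (t⁻¹ • z) - φ (t⁻¹ • z')| := by
        rw [dilate, dilate, ← mul_sub, abs_mul, abs_of_pos (by positivity)]
    _ ≤ (t ^ n)⁻¹ * (L * (t⁻¹ * ‖z - z'‖)) := by gcongr
    _ = L * ‖z - z'‖ / t ^ (n + 1) := by rw [pow_succ]; field_simp
    _ ≤ L * ‖z - z'‖ / r ^ (n + 1) := by gcongr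

lemma integrable_dilate_mul (hφ : Continuous φ) {M : ℝ} (hM : ∀ z, |φ z| ≤ M)
    (hf : Integrable f) (t : ℝ) (x : En n) : Integrable fun y => dilate φ t (x - y) * f y := by
  unfold dilate
  refine hf.bdd_mul (c := |(t ^ n)⁻¹| * M) (by fun_prop) (.of_forall fun y => ?_)
  rw [norm_mul, Real.norm_eq_abs, Real.norm_eq_abs]
  gcongr
  exact hM _

lemma integral_abs_dilate (φ : En n → ℝ) (ht : 0 < t) (x : En n) :
    ∫ y, |dilate φ t (x - y)| = ∫ z, |φ z| := by
  rw [integral_sub_left_eq_self (fun z => |dilate φ t z|) volume x]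
  simp_rw [dilate, abs_mul]
  rw [integral_const_mul, Measure.integral_comp_smul volume (fun z => |φ z|),
    finrank_euclideanSpace_fin, inv_pow, inv_inv, abs_of_pos (by positivity),
    abs_of_pos (by positivity), smul_eq_mul, inv_mul_cancel_left₀ (by positivity)]

lemma integrable_dilate (hφ : Integrable φ) (ht : 0 < t) (x : En n) :
    Integrable fun y => dilate φ t (x - y) :=
  ((hφ.comp_smul (inv_ne_zero ht.ne')).const_mul _).comp_sub_left x

lemma abs_phiConv_le (hφ : Integrable φ) {C : ℝ} (hf : ∀ y, |f y| ≤ C) (ht : 0 < t) (x : En n) :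
    |phiConv n φ f t x| ≤ C * ∫ z, |φ z| := by
  simp_rw [phiConv_eq_integral_dilate, mul_comm (dilate φ t _)]
  rw [← integral_abs_dilate φ ht x]
  exact abs_integral_mul_le_mul_integral_abs (integrable_dilate hφ ht x) fun y _ => hf y

lemma abs_phiConv_le_Mphi (hφ : Integrable φ) {C : ℝ} (hf : ∀ y, |f y| ≤ C) (ht : 0 < t)
    (x : En n) : |phiConv n φ f t x| ≤ Mphi n φ f x := by
  have hbdd : BddAbove (range fun t : {t : ℝ // 0 < t} => |phiConv n φ f t x|) :=
    ⟨C * ∫ z, |φ z|, forall_mem_range.2 fun t => abs_phiConv_le hφ hf t.2 x⟩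
  exact le_ciSup hbdd ⟨t, ht⟩

lemma ofReal_Mphi_mul_le {a : ℝ} (ha : 0 ≤ a) {S : ℝ≥0∞}
    (h : ∀ t, 0 < t → ENNReal.ofReal (|phiConv n φ f t x| * a) ≤ S) :
    ENNReal.ofReal (Mphi n φ f x * a) ≤ S := by
  rcases eq_or_ne S ∞ with rfl | hS
  · exact le_top
  have : Nonempty {t : ℝ // 0 < t} := ⟨⟨1, one_pos⟩⟩
  rw [ENNReal.ofReal_le_iff_le_toReal hS, Mphi, Real.iSup_mul_of_nonneg ha]
  exact ciSup_le fun t => (ENNReal.ofReal_le_iff_le_toReal hS).1 (h t t.2)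

lemma phiConv_sub (hφ : Continuous φ) {M : ℝ} (hM : ∀ z, |φ z| ≤ M) {f₁ f₂ : En n → ℝ}
    (hf₁ : Integrable f₁) (hf₂ : Integrable f₂) (t : ℝ) (x : En n) :
    phiConv n φ (f₁ - f₂) t x = phiConv n φ f₁ t x - phiConv n φ f₂ t x := by
  simp_rw [phiConv_eq_integral_dilate, Pi.sub_apply, mul_sub]
  exact integral_sub (integrable_dilate_mul hφ hM hf₁ t x) (integrable_dilate_mul hφ hM hf₂ t x)

lemma phiConv_eq_integral_dilate_sub (hφ : Continuous φ) {M : ℝ} (hM : ∀ z, |φ z| ≤ M)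
    (hf : Integrable f) (hf₀ : ∫ y, f y = 0) (t : ℝ) (x : En n) (a : ℝ) :
    phiConv n φ f t x = ∫ y, (dilate φ t (x - y) - a) * f y := by
  simp_rw [sub_mul]
  rw [integral_sub (integrable_dilate_mul hφ hM hf t x) (hf.const_mul a), integral_const_mul, hf₀,
    mul_zero, sub_zero, phiConv_eq_integral_dilate]

lemma hasSum_phiConv {ι : Type*} [Countable ι] {F : ι → En n → ℝ} (hφ : Continuous φ) {M : ℝ}
    (hM : ∀ z, |φ z| ≤ M) (hF : ∀ i, Integrable (F i)) (hsum : Summable fun i => ∫ y, |F i y|)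
    (t : ℝ) (x : En n) :
    HasSum (fun i => phiConv n φ (F i) t x) (phiConv n φ (fun y => ∑' i, F i y) t x) := by
  simp_rw [phiConv_eq_integral_dilate, ← tsum_mul_left]
  have hint := fun i => integrable_dilate_mul hφ hM (hF i) t x
  refine hasSum_integral_of_summable_integral_norm hint ?_
  refine .of_nonneg_of_le (fun i => by positivity) (fun i => ?_) (hsum.mul_left (|(t ^ n)⁻¹| * M))
  rw [← integral_const_mul]
  refine integral_mono (hint i).norm ((hF i).abs.const_mul _) fun y => ?_
  simp only [dilate, norm_mul, Real.norm_eq_abs]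
  gcongr
  exact hM _

lemma phiConv_const_mul (a : ℝ) : phiConv n φ (fun y => a * f y) t x = a * phiConv n φ f t x := by
  simp_rw [phiConv_eq_integral_dilate, ← integral_const_mul, mul_left_comm a]

lemma abs_phiConv_le_of_integral_eq_zero (hφ : ∀ z, 1 < ‖z‖ → φ z = 0) {M : ℝ}
    (hM : ∀ z, |φ z| ≤ M) {L : ℝ≥0} (hL : LipschitzWith L φ) (hf : Integrable f)
    (hf₀ : ∫ y, f y = 0) {ρ : ℝ} (hρ : 0 < ρ) (hsupp : ∀ y, ρ < ‖y‖ → f y = 0) (ht : 0 < t)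
    (hx : 2 * ρ ≤ ‖x‖) :
    |phiConv n φ f t x| ≤ L * (∫ y, |f y|) * 3 ^ (n + 1) * (ρ / (ρ + ‖x‖) ^ (n + 1)) := by
  have hx0 : 0 < ‖x‖ := by linarith
  have hfrac : 1 / (‖x‖ / 2) ≤ 3 / (ρ + ‖x‖) := by
    rw [div_le_div_iff₀ (by positivity) (by positivity)]
    linarith
  have hkernel : ∀ y, f y ≠ 0 →
      |dilate φ t (x - y) - dilate φ t x| ≤ L * ρ / (‖x‖ / 2) ^ (n + 1) := by
    intro y hy
    have hyρ : ‖y‖ ≤ ρ := not_lt.1 (mt (hsupp y) hy)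
    refine (abs_dilate_sub_le hφ hL ht (r := ‖x‖ / 2) (by positivity) ?_ (by linarith)).trans ?_
    · linarith [norm_sub_norm_le x y]
    · rw [sub_sub_cancel_left, norm_neg]
      gcongr
  rw [phiConv_eq_integral_dilate_sub hL.continuous hM hf hf₀ t x (dilate φ t x)]
  calc |∫ y, (dilate φ t (x - y) - dilate φ t x) * f y|
      ≤ L * ρ / (‖x‖ / 2) ^ (n + 1) * ∫ y, |f y| :=
        abs_integral_mul_le_mul_integral_abs hf hkernel
    _ = L * ρ * (∫ y, |f y|) * (1 / (‖x‖ / 2)) ^ (n + 1) := by rw [one_div_pow]; ring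
    _ ≤ L * ρ * (∫ y, |f y|) * (3 / (ρ + ‖x‖)) ^ (n + 1) := by gcongr
    _ = _ := by rw [div_pow]; ring

end Convolution

section TestFunction

variable {n : ℕ} {φ : En n → ℝ}

lemma IsTestFun.hasCompactSupport (h : IsTestFun n φ) : HasCompactSupport φ :=
  .intro (isCompact_closedBall _ _) h.2.1

lemma IsTestFun.continuous (h : IsTestFun n φ) : Continuous φ := h.1.continuous

lemma IsTestFun.integrable (h : IsTestFun n φ) : Integrable φ :=
  h.continuous.integrable_of_hasCompactSupport h.hasCompactSupport

lemma IsTestFun.exists_abs_le (h : IsTestFun n φ) : ∃ M, ∀ z, |φ z| ≤ M :=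
  h.hasCompactSupport.exists_bound_of_continuous h.continuous

lemma IsTestFun.exists_lipschitzWith (h : IsTestFun n φ) : ∃ L, LipschitzWith L φ :=
  ContDiff.lipschitzWith_of_hasCompactSupport h.hasCompactSupport h.1 (by simp)

lemma IsTestFun.eq_zero (h : IsTestFun n φ) (z : En n) (hz : 1 < ‖z‖) : φ z = 0 :=
  h.2.1 z (by simpa using hz)

lemma exists_isTestFun_eq_const_on_half_ball (n : ℕ) : ∃ (φ : En n → ℝ) (c : ℝ),
    IsTestFun n φ ∧ 0 < c ∧ (∀ z, φ z ≤ c) ∧ ∀ z, ‖z‖ ≤ 1 / 2 → φ z = c := by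
  let f : ContDiffBump (0 : En n) := ⟨1 / 2, 1, by norm_num, by norm_num⟩
  have hpos : 0 < ∫ z, f z := f.integral_pos
  refine ⟨f.normed volume, 1 / ∫ z, f z, ⟨f.contDiff_normed, fun z hz => ?_, f.integral_normed⟩,
    by positivity, fun z => ?_, fun z hz => ?_⟩
  · rw [f.normed_def, f.zero_of_le_dist (not_le.1 hz).le, zero_div]
  · rw [f.normed_def]
    gcongr
    exact f.le_one
  · rw [f.normed_def, f.one_of_mem_closedBall (mem_closedBall_zero_iff.2 hz)]

end TestFunction

section Bump

/-- A bounded function of integral one supported in the closed ball of radius `s` about `p`. The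
translates `χ_{Q_j}` and the function `θ` of the theorem are bumps with common `s` and `C`. -/
structure IsBumpAt {n : ℕ} (p : En n) (s C : ℝ) (b : En n → ℝ) : Prop where
  aestronglyMeasurable : AEStronglyMeasurable b
  abs_le : ∀ y, |b y| ≤ C
  eq_zero : ∀ y, s < ‖y - p‖ → b y = 0
  integral_eq_one : ∫ y, b y = 1

variable {n : ℕ} {p : En n} {s C : ℝ} {b θ : En n → ℝ}

lemma IsBumpAt.mono {C' : ℝ} (hb : IsBumpAt p s C b) (hC : C ≤ C') : IsBumpAt p s C' b :=
  { hb with abs_le := fun y => (hb.abs_le y).trans hC }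

lemma IsBumpAt.bound_nonneg (hb : IsBumpAt p s C b) : 0 ≤ C :=
  (abs_nonneg _).trans (hb.abs_le 0)

lemma IsBumpAt.eq_zero_of_notMem (hb : IsBumpAt p s C b) {y : En n} (hy : y ∉ closedBall p s) :
    b y = 0 :=
  hb.eq_zero y (by simpa [dist_eq_norm] using hy)

lemma IsBumpAt.integrable (hb : IsBumpAt p s C b) : Integrable b := by
  have hball : IntegrableOn b (closedBall p s) :=
    .of_bound measure_closedBall_lt_top hb.aestronglyMeasurable.restrict C (.of_forall hb.abs_le)
  exact (integrableOn_iff_integrable_of_support_subset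
    fun y hy => not_not.1 (mt hb.eq_zero_of_notMem hy)).1 hball

lemma IsBumpAt.integral_abs_le (hb : IsBumpAt p s C b) :
    ∫ y, |b y| ≤ C * volume.real (closedBall (0 : En n) s) := by
  rw [← setIntegral_eq_integral_of_forall_compl_eq_zero (s := closedBall p s)
      fun y hy => by rw [hb.eq_zero_of_notMem hy, abs_zero],
    measureReal_def, ← Measure.addHaar_closedBall_center volume p s, ← measureReal_def]
  refine (Real.le_norm_self _).trans (norm_setIntegral_le_of_norm_le_const measure_closedBall_lt_top
    fun y _ => ?_)
  rw [Real.norm_eq_abs, abs_abs]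
  exact hb.abs_le y

lemma IsBumpAt.integral_sub_eq_zero {q : En n} (hb : IsBumpAt p s C b) (hθ : IsBumpAt q s C θ) :
    ∫ y, (b - θ) y = 0 := by
  rw [integral_sub' hb.integrable hθ.integrable, hb.integral_eq_one, hθ.integral_eq_one, sub_self]

lemma IsBumpAt.abs_sub_le {q : En n} (hb : IsBumpAt p s C b) (hθ : IsBumpAt q s C θ) (y : En n) :
    |(b - θ) y| ≤ 2 * C :=
  (abs_sub _ _).trans (by linarith [hb.abs_le y, hθ.abs_le y])

lemma IsBumpAt.integral_abs_sub_le {q : En n} (hb : IsBumpAt p s C b) (hθ : IsBumpAt q s C θ) :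
    ∫ y, |(b - θ) y| ≤ 2 * (C * volume.real (closedBall (0 : En n) s)) := by
  calc ∫ y, |(b - θ) y| ≤ ∫ y, (|b y| + |θ y|) :=
        integral_mono (hb.integrable.sub hθ.integrable).abs
          (hb.integrable.abs.add hθ.integrable.abs) fun y => abs_sub _ _
    _ = (∫ y, |b y|) + ∫ y, |θ y| := integral_add hb.integrable.abs hθ.integrable.abs
    _ ≤ _ := by linarith [hb.integral_abs_le, hθ.integral_abs_le]

lemma IsBumpAt.sub_apply_eq_zero (hb : IsBumpAt p s C b) (hθ : IsBumpAt 0 s C θ) {y : En n}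
    (hy : ‖p‖ + s < ‖y‖) : (b - θ) y = 0 := by
  have hyp : s < ‖y - p‖ := by linarith [norm_sub_norm_le y p]
  have hy0 : s < ‖y - 0‖ := by rw [sub_zero]; linarith [norm_nonneg p]
  rw [Pi.sub_apply, hb.eq_zero y hyp, hθ.eq_zero y hy0, sub_zero]

lemma abs_phiConv_le_of_eq_zero_off_ball {φ f : En n → ℝ} {M t : ℝ} {x : En n}
    (hφ : ∀ z, 1 < ‖z‖ → φ z = 0) (hM : ∀ z, |φ z| ≤ M) (hf : Integrable f) (hs : 0 < s)
    (hsupp : ∀ y, s < ‖y - p‖ → f y = 0) (ht : 0 < t) (hx : 2 * s ≤ ‖x - p‖) :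
    |phiConv n φ f t x| ≤ M * (∫ y, |f y|) * 3 ^ n / (s + ‖x - p‖) ^ n := by
  have hM0 : 0 ≤ M := (abs_nonneg _).trans (hM 0)
  have hx0 : 0 < ‖x - p‖ := by linarith
  have hfrac : 1 / (‖x - p‖ / 2) ≤ 3 / (s + ‖x - p‖) := by
    rw [div_le_div_iff₀ (by positivity) (by positivity)]
    linarith
  have hkernel : ∀ y, f y ≠ 0 → |dilate φ t (x - y)| ≤ M / (‖x - p‖ / 2) ^ n := by
    intro y hy
    have hyp : ‖y - p‖ ≤ s := not_lt.1 (mt (hsupp y) hy)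
    have htri : ‖x - p‖ ≤ ‖x - y‖ + ‖y - p‖ := norm_sub_le_norm_sub_add_norm_sub x y p
    exact abs_dilate_le hφ hM ht (by positivity) (by linarith)
  calc |phiConv n φ f t x|
      ≤ M / (‖x - p‖ / 2) ^ n * ∫ y, |f y| := abs_integral_mul_le_mul_integral_abs hf hkernel
    _ = M * (∫ y, |f y|) * (1 / (‖x - p‖ / 2)) ^ n := by rw [one_div_pow]; ring
    _ ≤ M * (∫ y, |f y|) * (3 / (s + ‖x - p‖)) ^ n := by gcongr
    _ = _ := by rw [div_pow]; ring

lemma exists_abs_phiConv_bump_le {φ : En n → ℝ} (hφ : IsTestFun n φ) (hs : 0 < s) (hC : 0 ≤ C) :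
    ∃ K, 0 ≤ K ∧ ∀ (p : En n) (b : En n → ℝ), IsBumpAt p s C b → ∀ t, 0 < t → ∀ x,
      |phiConv n φ b t x| ≤ K / (s + ‖x - p‖) ^ n := by
  obtain ⟨M, hM⟩ := hφ.exists_abs_le
  have hM0 : 0 ≤ M := (abs_nonneg _).trans (hM 0)
  set V := volume.real (closedBall (0 : En n) s)
  refine ⟨C * (∫ z, |φ z|) * (3 * s) ^ n + M * (C * V) * 3 ^ n, by positivity,
    fun p b hb t ht x => ?_⟩
  rcases le_or_gt (2 * s) ‖x - p‖ with hfar | hnear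
  · refine (abs_phiConv_le_of_eq_zero_off_ball hφ.eq_zero hM hb.integrable hs hb.eq_zero ht
      hfar).trans ?_
    gcongr
    refine le_add_of_nonneg_of_le (by positivity) ?_
    gcongr
    exact hb.integral_abs_le
  · refine (abs_phiConv_le hφ.integrable hb.abs_le ht x).trans ?_
    rw [le_div_iff₀ (by positivity)]
    refine le_add_of_le_of_nonneg ?_ (by positivity)
    gcongr
    linarith

end Bump

section Majorant

variable {n : ℕ} {p : En n} {s C : ℝ} {b θ ω φ : En n → ℝ} {t : ℝ} {x : En n}

lemma mem_ball_of_norm_lt_two_mul (hs : 0 ≤ s) (hx : ‖x‖ < 2 * (‖p‖ + s)) :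
    x ∈ ball 0 (3 * (‖p‖ + s)) ∧ x - p ∈ ball 0 (3 * (‖p‖ + s)) := by
  have := norm_nonneg p
  rw [mem_ball_zero_iff, mem_ball_zero_iff]
  constructor <;> linarith [norm_sub_le x p]

lemma ofReal_abs_phiConv_sub_mul_le_of_norm_lt (hφ : IsTestFun n φ) (hω : IsRadialWeight ω)
    (hs : 0 < s) (hb : IsBumpAt p s C b) (hθ : IsBumpAt 0 s C θ) {K : ℝ} (hK : 0 ≤ K)
    (hbK : |phiConv n φ b t x| ≤ K / (s + ‖x - p‖) ^ n)
    (hθK : |phiConv n φ θ t x| ≤ K / (s + ‖x‖) ^ n) (hx : ‖x‖ < 2 * (‖p‖ + s)) :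
    ENNReal.ofReal (|phiConv n φ (b - θ) t x| * ω x) ≤
      ENNReal.ofReal (2 * K) * atomMajorant s ω p x := by
  obtain ⟨M, hM⟩ := hφ.exists_abs_le
  obtain ⟨hxball, hxpball⟩ := mem_ball_of_norm_lt_two_mul hs.le hx
  have hωx := hω.nonneg x
  have hωxp := hω.nonneg (x - p)
  set u := ω x / (s + ‖x‖) ^ n
  set v := ω (x - p) / (s + ‖x - p‖) ^ n
  have hv : 0 ≤ v := by positivity
  have hreal : |phiConv n φ (b - θ) t x| * ω x ≤ 2 * K * (u + v) :=
    calc |phiConv n φ (b - θ) t x| * ω x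
        ≤ (K / (s + ‖x - p‖) ^ n + K / (s + ‖x‖) ^ n) * ω x := by
          rw [phiConv_sub hφ.continuous hM hb.integrable hθ.integrable]
          gcongr
          exact (abs_sub _ _).trans (add_le_add hbK hθK)
      _ = K * (ω x / (s + ‖x - p‖) ^ n + u) := by simp only [u]; ring
      _ ≤ K * ((u + v) + (u + v)) := by
          gcongr
          · exact hω.div_add_norm_sub_pow_le hs n x p
          · linarith
      _ = 2 * K * (u + v) := by ring
  refine (ENNReal.ofReal_le_ofReal hreal).trans ?_
  rw [ENNReal.ofReal_mul (by positivity), ENNReal.ofReal_add (by positivity) hv, atomMajorant,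
    truncWeight, indicator_of_mem hxball, indicator_of_mem hxpball, finrank_euclideanSpace_fin]
  exact mul_le_mul' le_rfl le_self_add

lemma exists_ofReal_abs_phiConv_sub_mul_le (hφ : IsTestFun n φ) (hω : IsRadialWeight ω)
    (hs : 0 < s) (hC : 0 ≤ C) :
    ∃ K : ℝ, ∀ (p : En n) (b θ : En n → ℝ), IsBumpAt p s C b → IsBumpAt 0 s C θ →
      ∀ t, 0 < t → ∀ x, ENNReal.ofReal (|phiConv n φ (b - θ) t x| * ω x) ≤
        ENNReal.ofReal K * atomMajorant s ω p x := by
  obtain ⟨M, hM⟩ := hφ.exists_abs_le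
  obtain ⟨L, hL⟩ := hφ.exists_lipschitzWith
  obtain ⟨K, hK, hdecay⟩ := exists_abs_phiConv_bump_le hφ hs hC
  set A := 2 * (C * volume.real (closedBall (0 : En n) s))
  have hω0 := hω.nonneg 0
  refine ⟨max (2 * K) (L * A * 3 ^ (n + 1) * ω 0), fun p b θ hb hθ t ht x => ?_⟩
  rcases lt_or_ge ‖x‖ (2 * (‖p‖ + s)) with hnear | hfar
  · have hθK := hdecay 0 θ hθ t ht x
    rw [sub_zero] at hθK
    refine (ofReal_abs_phiConv_sub_mul_le_of_norm_lt hφ hω hs hb hθ hK (hdecay p b hb t ht x) hθK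
      hnear).trans ?_
    gcongr
    exact le_max_left _ _
  · have hcancel := abs_phiConv_le_of_integral_eq_zero hφ.eq_zero hM hL
      (hb.integrable.sub hθ.integrable) (hb.integral_sub_eq_zero hθ) (by positivity)
      (fun y hy => hb.sub_apply_eq_zero hθ hy) ht hfar
    have hreal : |phiConv n φ (b - θ) t x| * ω x ≤
        L * A * 3 ^ (n + 1) * ω 0 * ((‖p‖ + s) / (‖p‖ + s + ‖x‖) ^ (n + 1)) :=
      calc |phiConv n φ (b - θ) t x| * ω x
          ≤ L * A * 3 ^ (n + 1) * ((‖p‖ + s) / (‖p‖ + s + ‖x‖) ^ (n + 1)) * ω 0 := by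
            gcongr
            · exact hω.nonneg x
            · refine hcancel.trans ?_
              gcongr
              exact hb.integral_abs_sub_le hθ
            · exact hω.le_apply_zero x
        _ = _ := by ring
    refine (ENNReal.ofReal_le_ofReal hreal).trans ?_
    rw [ENNReal.ofReal_mul (by positivity), atomMajorant, finrank_euclideanSpace_fin]
    gcongr
    · exact le_max_right _ _
    · exact le_add_self

end Majorant

section Omega

variable {n : ℕ} {ω : En n → ℝ}

lemma OmegaFun_nonneg (hω : IsRadialWeight ω) (R : ℝ) : 0 ≤ OmegaFun n ω R := by
  refine add_nonneg (integral_nonneg hω.nonneg) (integral_nonneg fun y => ?_)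
  have := hω.nonneg y
  positivity

lemma ofReal_OmegaFun (hω : IsRadialWeight ω) (R : ℝ) :
    ENNReal.ofReal (OmegaFun n ω R) =
      ENNReal.ofReal (∫ y in unitQ n, ω y) + annulusLIntegral volume ω R := by
  have hnonneg (y : En n) : 0 ≤ ω y / ‖y‖ ^ n := div_nonneg (hω.nonneg y) (by positivity)
  have hbound : ∀ y ∈ annulus (En n) R, ‖ω y / ‖y‖ ^ n‖ ≤ ω 0 := fun y hy => by
    rw [Real.norm_of_nonneg (hnonneg y)]
    exact (div_le_self (hω.nonneg y) (one_le_pow₀ hy.1.le)).trans (hω.le_apply_zero y)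
  have hfinite : volume (annulus (En n) R) < ∞ :=
    (measure_mono fun y hy => mem_ball_zero_iff.2 hy.2).trans_lt
      (measure_ball_lt_top (x := (0 : En n)) (r := R))
  have hint : IntegrableOn (fun y => ω y / ‖y‖ ^ n) (annulus (En n) R) := by
    have hmeas : Measurable fun y => ω y / ‖y‖ ^ n := hω.measurable.div (by fun_prop)
    exact .of_bound hfinite hmeas.aestronglyMeasurable (ω 0)
      ((ae_restrict_iff' (measurableSet_annulus R)).2 (.of_forall hbound))
  rw [OmegaFun, ENNReal.ofReal_add (integral_nonneg hω.nonneg) (integral_nonneg hnonneg),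
    annulusLIntegral, finrank_euclideanSpace_fin, ← annulus,
    ofReal_integral_eq_lintegral_ofReal hint (.of_forall hnonneg)]

lemma lintegral_indicator_annulus_mul (ω : En n → ℝ) {c : ℝ} (hc : 0 ≤ c) (R : ℝ) :
    ∫⁻ x, ENNReal.ofReal ((annulus (En n) R).indicator (fun x => c / ‖x‖ ^ n) x * ω x) =
      ENNReal.ofReal c * annulusLIntegral volume ω R := by
  rw [annulusLIntegral, finrank_euclideanSpace_fin,
    ← lintegral_const_mul' _ _ ENNReal.ofReal_ne_top,
    ← lintegral_indicator (measurableSet_annulus R)]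
  congr with x
  by_cases hx : x ∈ annulus (En n) R
  · rw [indicator_of_mem hx, indicator_of_mem hx, ← ENNReal.ofReal_mul hc, mul_div_left_comm,
      mul_comm]
  · simp [hx]

end Omega

/-- The function `∑ λ_i (b_i - θ)`, whose bumps `b_i` have each had their mass cancelled by one at
the origin. -/
def bumpSeries {ι : Type*} {n : ℕ} (lam : ι → ℝ) (b : ι → En n → ℝ) (θ : En n → ℝ) (y : En n) :
    ℝ :=
  ∑' i, lam i * (b i - θ) y

section BumpSeries

variable {ι : Type*} {n : ℕ} {s C : ℝ} {θ : En n → ℝ} {p : ι → En n} {b : ι → En n → ℝ}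
  {lam : ι → ℝ} {φ ω : En n → ℝ}

lemma abs_bumpSeries_le (hθ : IsBumpAt 0 s C θ) (hb : ∀ i, IsBumpAt (p i) s C (b i))
    (hlam : Summable fun i => |lam i|) (y : En n) :
    |bumpSeries lam b θ y| ≤ (∑' i, |lam i|) * (2 * C) := by
  rw [← Real.norm_eq_abs]
  refine tsum_of_norm_bounded (hlam.hasSum.mul_right _) fun i => ?_
  rw [norm_mul, Real.norm_eq_abs, Real.norm_eq_abs]
  gcongr
  exact (hb i).abs_sub_le hθ y

lemma tsum_ofReal_mul_annulusLIntegral_add_lt_top (hω : IsRadialWeight ω)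
    (hlam : Summable fun i => |lam i|) (hsum : Summable fun i => |lam i| * OmegaFun n ω ‖p i‖)
    {T : ℝ≥0∞} (hT : T < ∞) :
    ∑' i, ENNReal.ofReal |lam i| * (2 * annulusLIntegral volume ω ‖p i‖ + T) < ∞ := by
  have hΩ (i : ι) : annulusLIntegral volume ω ‖p i‖ ≤ ENNReal.ofReal (OmegaFun n ω ‖p i‖) := by
    rw [ofReal_OmegaFun hω]
    exact le_add_self
  calc ∑' i, ENNReal.ofReal |lam i| * (2 * annulusLIntegral volume ω ‖p i‖ + T)
      ≤ ∑' i, ENNReal.ofReal |lam i| * (2 * ENNReal.ofReal (OmegaFun n ω ‖p i‖) + T) := by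
        gcongr with i
        exact hΩ i
    _ = 2 * ∑' i, ENNReal.ofReal (|lam i| * OmegaFun n ω ‖p i‖) +
          T * ∑' i, ENNReal.ofReal |lam i| := by
        rw [← ENNReal.tsum_mul_left, ← ENNReal.tsum_mul_left, ← ENNReal.tsum_add]
        congr with i
        rw [ENNReal.ofReal_mul (abs_nonneg _)]
        ring
    _ < ∞ := ENNReal.add_lt_top.2 ⟨ENNReal.mul_lt_top (by simp) hsum.tsum_ofReal_lt_top,
        ENNReal.mul_lt_top hT hlam.tsum_ofReal_lt_top⟩

variable [Countable ι]

lemma hasSum_phiConv_bumpSeries (hφ : IsTestFun n φ) (hθ : IsBumpAt 0 s C θ)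
    (hb : ∀ i, IsBumpAt (p i) s C (b i)) (hlam : Summable fun i => |lam i|) (t : ℝ) (x : En n) :
    HasSum (fun i => lam i * phiConv n φ (b i - θ) t x)
      (phiConv n φ (bumpSeries lam b θ) t x) := by
  obtain ⟨M, hM⟩ := hφ.exists_abs_le
  have hint (i : ι) : Integrable fun y => lam i * (b i - θ) y :=
    ((hb i).integrable.sub hθ.integrable).const_mul _
  have hsum : Summable fun i => ∫ y, |lam i * (b i - θ) y| := by
    refine .of_nonneg_of_le (fun i => by positivity) (fun i => ?_)
      (hlam.mul_right (2 * (C * volume.real (closedBall (0 : En n) s))))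
    simp_rw [abs_mul]
    rw [integral_const_mul]
    gcongr
    exact (hb i).integral_abs_sub_le hθ
  simp_rw [← phiConv_const_mul]
  exact hasSum_phiConv hφ.continuous hM hint hsum t x

lemma ofReal_Mphi_bumpSeries_mul_le (hφ : IsTestFun n φ) (hω : IsRadialWeight ω)
    (hθ : IsBumpAt 0 s C θ) (hb : ∀ i, IsBumpAt (p i) s C (b i))
    (hlam : Summable fun i => |lam i|) {x : En n} {m : ι → ℝ≥0∞}
    (hm : ∀ i t, 0 < t → ENNReal.ofReal (|phiConv n φ (b i - θ) t x| * ω x) ≤ m i) :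
    ENNReal.ofReal (Mphi n φ (bumpSeries lam b θ) x * ω x) ≤
      ∑' i, ENNReal.ofReal |lam i| * m i := by
  refine ofReal_Mphi_mul_le (hω.nonneg x) fun t ht => ?_
  have hsum := (hasSum_phiConv_bumpSeries hφ hθ hb hlam t x).mul_right (ω x)
  calc ENNReal.ofReal (|phiConv n φ (bumpSeries lam b θ) t x| * ω x)
      = ‖∑' i, lam i * phiConv n φ (b i - θ) t x * ω x‖ₑ := by
        rw [hsum.tsum_eq, Real.enorm_eq_ofReal_abs, abs_mul, abs_of_nonneg (hω.nonneg x)]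
    _ ≤ ∑' i, ‖lam i * phiConv n φ (b i - θ) t x * ω x‖ₑ := enorm_tsum_le_tsum_enorm
    _ ≤ ∑' i, ENNReal.ofReal |lam i| * m i := by
        gcongr with i
        rw [Real.enorm_eq_ofReal_abs, mul_assoc, abs_mul, abs_mul, abs_of_nonneg (hω.nonneg x),
          ENNReal.ofReal_mul (abs_nonneg _)]
        gcongr
        exact hm i t ht

theorem lintegral_Mphi_bumpSeries_lt_top (hφ : IsTestFun n φ) (hω : IsRadialWeight ω)
    (hs : 0 < s) (hθ : IsBumpAt 0 s C θ) (hb : ∀ i, IsBumpAt (p i) s C (b i))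
    (hlam : Summable fun i => |lam i|) (hsum : Summable fun i => |lam i| * OmegaFun n ω ‖p i‖) :
    ∫⁻ x, ENNReal.ofReal (Mphi n φ (bumpSeries lam b θ) x * ω x) < ∞ := by
  obtain ⟨K, hK⟩ := exists_ofReal_abs_phiConv_sub_mul_le hφ hω hs hθ.bound_nonneg
  obtain ⟨T, hT, hmajorant⟩ := exists_lintegral_atomMajorant_le (volume : Measure (En n)) hω hs
  have hmeas (i : ι) := measurable_atomMajorant hω s (p i)
  calc ∫⁻ x, ENNReal.ofReal (Mphi n φ (bumpSeries lam b θ) x * ω x)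
      ≤ ∫⁻ x, ∑' i, ENNReal.ofReal |lam i| * (ENNReal.ofReal K * atomMajorant s ω (p i) x) :=
        lintegral_mono fun x => ofReal_Mphi_bumpSeries_mul_le hφ hω hθ hb hlam
          fun i t ht => hK (p i) (b i) θ (hb i) hθ t ht x
    _ = ∑' i, ENNReal.ofReal |lam i| *
          (ENNReal.ofReal K * ∫⁻ x, atomMajorant s ω (p i) x) := by
        rw [lintegral_tsum fun i => by fun_prop]
        congr with i
        rw [lintegral_const_mul _ (by fun_prop), lintegral_const_mul _ (hmeas i)]
    _ ≤ ∑' i, ENNReal.ofReal |lam i| *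
          (ENNReal.ofReal K * (2 * annulusLIntegral volume ω ‖p i‖ + T)) := by
        gcongr with i
        exact hmajorant (p i)
    _ = ENNReal.ofReal K *
          ∑' i, ENNReal.ofReal |lam i| * (2 * annulusLIntegral volume ω ‖p i‖ + T) := by
        simp_rw [mul_left_comm (ENNReal.ofReal |lam _|), ENNReal.tsum_mul_left]
    _ < ∞ := ENNReal.mul_lt_top ENNReal.ofReal_lt_top
        (tsum_ofReal_mul_annulusLIntegral_add_lt_top hω hlam hsum hT)

end BumpSeries

section LowerBound

variable {n : ℕ} {p : En n} {s C : ℝ} {b θ φ : En n → ℝ} {c t : ℝ} {x : En n}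

lemma phiConv_sub_eq_integral_of_eq_const (hφ : IsTestFun n φ) (hc : ∀ z, ‖z‖ ≤ 1 / 2 → φ z = c)
    (hb : IsBumpAt p s C b) (hθ : IsBumpAt 0 s C θ) (ht : 0 < t) (hx : ‖x‖ + s ≤ t / 2) :
    phiConv n φ (b - θ) t x = ∫ y, (dilate φ t (x - y) - (t ^ n)⁻¹ * c) * b y := by
  obtain ⟨M, hM⟩ := hφ.exists_abs_le
  -- `b - θ` has mean zero, so the constant `c / t^n` may be subtracted from the kernel, which then
  -- vanishes on the support of `θ`.
  rw [phiConv_eq_integral_dilate_sub hφ.continuous hM (hb.integrable.sub hθ.integrable)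
    (hb.integral_sub_eq_zero hθ) t x ((t ^ n)⁻¹ * c)]
  congr with y
  rw [Pi.sub_apply, mul_sub, sub_eq_self, mul_eq_zero, or_iff_not_imp_right]
  intro hy
  have hys : ‖y‖ ≤ s := by simpa using not_lt.1 (mt (hθ.eq_zero y) hy)
  have hhalf : ‖t⁻¹ • (x - y)‖ ≤ 1 / 2 := by
    rw [norm_smul, norm_inv, Real.norm_of_nonneg ht.le, inv_mul_le_iff₀ ht]
    linarith [norm_sub_le x y]
  rw [dilate, hc _ hhalf, sub_self]

lemma phiConv_sub_nonpos (hφ : IsTestFun n φ) (hle : ∀ z, φ z ≤ c)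
    (hc : ∀ z, ‖z‖ ≤ 1 / 2 → φ z = c) (hb : IsBumpAt p s C b) (hb₀ : ∀ y, 0 ≤ b y)
    (hθ : IsBumpAt 0 s C θ) (ht : 0 < t) (hx : ‖x‖ + s ≤ t / 2) :
    phiConv n φ (b - θ) t x ≤ 0 := by
  rw [phiConv_sub_eq_integral_of_eq_const hφ hc hb hθ ht hx]
  refine integral_nonpos fun y => mul_nonpos_of_nonpos_of_nonneg (sub_nonpos.2 ?_) (hb₀ y)
  rw [dilate]
  gcongr
  exact hle _

lemma phiConv_sub_eq_neg (hφ : IsTestFun n φ) (hc : ∀ z, ‖z‖ ≤ 1 / 2 → φ z = c)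
    (hb : IsBumpAt p s C b) (hθ : IsBumpAt 0 s C θ) (ht : 0 < t) (hx : ‖x‖ + s ≤ t / 2)
    (hp : ‖x‖ + s + t < ‖p‖) : phiConv n φ (b - θ) t x = -(c / t ^ n) := by
  have hvanish (y : En n) :
      (dilate φ t (x - y) - (t ^ n)⁻¹ * c) * b y = -(c / t ^ n) * b y := by
    by_cases hy : b y = 0
    · rw [hy, mul_zero, mul_zero]
    have hyp : ‖y - p‖ ≤ s := not_lt.1 (mt (hb.eq_zero y) hy)
    have hfar : t < ‖x - y‖ := by
      linarith [norm_sub_norm_le p x, norm_sub_le_norm_sub_add_norm_sub p y x,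
        norm_sub_rev p y, norm_sub_rev x y]
    rw [dilate_eq_zero hφ.eq_zero ht hfar]
    ring
  rw [phiConv_sub_eq_integral_of_eq_const hφ hc hb hθ ht hx]
  simp_rw [hvanish]
  rw [integral_const_mul, hb.integral_eq_one, mul_one]

lemma exists_isTestFun_indicator_le_neg_phiConv (n : ℕ) (hs : 0 < s) :
    ∃ (φ : En n → ℝ) (c : ℝ), IsTestFun n φ ∧ 0 < c ∧
      ∀ (p : En n) (C : ℝ) (b θ : En n → ℝ), IsBumpAt p s C b → (∀ y, 0 ≤ b y) →
        IsBumpAt 0 s C θ → ∀ x,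
          (annulus (En n) (‖p‖ / (3 * (1 + s)))).indicator (fun x => c / ‖x‖ ^ n) x ≤
            -phiConv n φ (b - θ) (2 * (‖x‖ + s)) x := by
  obtain ⟨φ, c, hφ, hc0, hle, hc⟩ := exists_isTestFun_eq_const_on_half_ball n
  refine ⟨φ, c / (2 * (1 + s)) ^ n, hφ, by positivity, fun p C b θ hb hb₀ hθ x => ?_⟩
  by_cases hx : x ∈ annulus (En n) (‖p‖ / (3 * (1 + s)))
  · rw [indicator_of_mem hx]
    obtain ⟨hx1, hxp⟩ := hx
    rw [lt_div_iff₀ (by positivity)] at hxp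
    have hsx : s ≤ s * ‖x‖ := le_mul_of_one_le_right hs.le hx1.le
    rw [phiConv_sub_eq_neg hφ hc hb hθ (by positivity) (by linarith) (by linarith), neg_neg,
      div_div, ← mul_pow]
    gcongr c / ?_ ^ n
    linarith
  · rw [indicator_of_notMem hx]
    exact neg_nonneg.2 (phiConv_sub_nonpos hφ hle hc hb hb₀ hθ (by positivity) (by linarith))

end LowerBound

section Converse

variable {ι : Type*} {n : ℕ} {s C : ℝ} {θ : En n → ℝ} {p : ι → En n}
  {b : ι → En n → ℝ} {lam : ι → ℝ} {φ ω : En n → ℝ}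

lemma summable_mul_OmegaFun_of_tsum_annulusLIntegral_ne_top (hω : IsRadialWeight ω)
    (hlam : Summable fun i => |lam i|) (hlam₀ : ∀ i, 0 ≤ lam i) {B : ℝ} (hB : 0 < B)
    (h : ∑' i, ENNReal.ofReal (lam i) * annulusLIntegral volume ω (‖p i‖ / B) ≠ ∞) :
    Summable fun i => lam i * OmegaFun n ω ‖p i‖ := by
  set T := ENNReal.ofReal (∫ y in unitQ n, ω y) +
    ENNReal.ofReal (ω 0 * B ^ finrank ℝ (En n)) * volume (ball (0 : En n) 1)
  have hT : T ≠ ∞ := ENNReal.add_ne_top.2 ⟨ENNReal.ofReal_ne_top,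
    ENNReal.mul_ne_top ENNReal.ofReal_ne_top measure_ball_lt_top.ne⟩
  have hΩ (i : ι) : ENNReal.ofReal (OmegaFun n ω ‖p i‖) ≤
      annulusLIntegral volume ω (‖p i‖ / B) + T := by
    have hscale := annulusLIntegral_mul_le (volume : Measure (En n)) hω hB.le
      (div_nonneg (norm_nonneg (p i)) hB.le)
    rw [mul_div_cancel₀ _ hB.ne'] at hscale
    rw [ofReal_OmegaFun hω, add_left_comm]
    gcongr
  have hfinite : ∑' i, ENNReal.ofReal (lam i * OmegaFun n ω ‖p i‖) ≠ ∞ := by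
    have hlam' : ∑' i, ENNReal.ofReal (lam i) ≠ ∞ := hlam.of_abs.tsum_ofReal_ne_top
    refine ne_top_of_le_ne_top (ENNReal.add_ne_top.2 ⟨h, ENNReal.mul_ne_top hlam' hT⟩) ?_
    rw [← ENNReal.tsum_mul_right, ← ENNReal.tsum_add]
    gcongr with i
    rw [ENNReal.ofReal_mul (hlam₀ i), ← mul_add]
    gcongr
    exact hΩ i
  have hnonneg (i : ι) := mul_nonneg (hlam₀ i) (OmegaFun_nonneg hω ‖p i‖)
  simpa only [ENNReal.toReal_ofReal (hnonneg _)] using ENNReal.summable_toReal hfinite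

variable [Countable ι]

lemma tsum_ofReal_mul_le_ofReal_Mphi (hφ : IsTestFun n φ) (hω : IsRadialWeight ω)
    (hθ : IsBumpAt 0 s C θ) (hb : ∀ i, IsBumpAt (p i) s C (b i))
    (hlam : Summable fun i => |lam i|) (hlam₀ : ∀ i, 0 ≤ lam i) {t : ℝ} (ht : 0 < t) {x : En n}
    {u : ι → ℝ} (hu₀ : ∀ i, 0 ≤ u i) (hu : ∀ i, u i ≤ -phiConv n φ (b i - θ) t x) :
    ∑' i, ENNReal.ofReal (lam i) * ENNReal.ofReal (u i * ω x) ≤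
      ENNReal.ofReal (Mphi n φ (bumpSeries lam b θ) x * ω x) := by
  have hsum := ((hasSum_phiConv_bumpSeries hφ hθ hb hlam t x).neg).mul_right (ω x)
  have hle (i : ι) : lam i * (u i * ω x) ≤ -(lam i * phiConv n φ (b i - θ) t x) * ω x := by
    rw [← mul_neg, mul_assoc]
    have := hω.nonneg x
    gcongr
    · exact hlam₀ i
    · exact hu i
  have hnonneg (i : ι) : 0 ≤ lam i * (u i * ω x) :=
    mul_nonneg (hlam₀ i) (mul_nonneg (hu₀ i) (hω.nonneg x))
  have husum := Summable.of_nonneg_of_le hnonneg hle hsum.summable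
  simp_rw [← ENNReal.ofReal_mul (hlam₀ _)]
  rw [← ENNReal.ofReal_tsum_of_nonneg hnonneg husum]
  refine ENNReal.ofReal_le_ofReal ((husum.tsum_le_tsum hle hsum.summable).trans ?_)
  rw [hsum.tsum_eq]
  gcongr
  · exact hω.nonneg x
  · exact (neg_le_abs _).trans
      (abs_phiConv_le_Mphi hφ.integrable (abs_bumpSeries_le hθ hb hlam) ht x)

theorem summable_of_lintegral_Mphi_bumpSeries_lt_top (hω : IsRadialWeight ω) (hs : 0 < s)
    (hθ : IsBumpAt 0 s C θ) (hb : ∀ i, IsBumpAt (p i) s C (b i)) (hb₀ : ∀ i y, 0 ≤ b i y)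
    (hlam : Summable fun i => |lam i|) (hlam₀ : ∀ i, 0 ≤ lam i)
    (hM : ∀ φ, IsTestFun n φ →
      ∫⁻ x, ENNReal.ofReal (Mphi n φ (bumpSeries lam b θ) x * ω x) < ∞) :
    Summable fun i => lam i * OmegaFun n ω ‖p i‖ := by
  obtain ⟨φ, c, hφ, hc, hlower⟩ := exists_isTestFun_indicator_le_neg_phiConv n hs
  let u (i : ι) : En n → ℝ :=
    (annulus (En n) (‖p i‖ / (3 * (1 + s)))).indicator fun x => c / ‖x‖ ^ n
  have hu₀ (i : ι) (x : En n) : 0 ≤ u i x := indicator_nonneg (fun x _ => by positivity) x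
  have humeas (i : ι) : Measurable (u i) :=
    Measurable.indicator (by fun_prop) (measurableSet_annulus _)
  have hωmeas := hω.measurable
  refine summable_mul_OmegaFun_of_tsum_annulusLIntegral_ne_top hω hlam hlam₀
    (B := 3 * (1 + s)) (by positivity) ?_
  have hint : ∑' i, ENNReal.ofReal (lam i) *
      (ENNReal.ofReal c * annulusLIntegral volume ω (‖p i‖ / (3 * (1 + s)))) < ∞ :=
    calc _ = ∑' i, ENNReal.ofReal (lam i) * ∫⁻ x, ENNReal.ofReal (u i x * ω x) := by
          simp_rw [u, lintegral_indicator_annulus_mul ω hc.le]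
      _ = ∫⁻ x, ∑' i, ENNReal.ofReal (lam i) * ENNReal.ofReal (u i x * ω x) := by
          rw [lintegral_tsum fun i => by fun_prop]
          congr with i
          rw [lintegral_const_mul _ (by fun_prop)]
      _ ≤ ∫⁻ x, ENNReal.ofReal (Mphi n φ (bumpSeries lam b θ) x * ω x) :=
          lintegral_mono fun x => tsum_ofReal_mul_le_ofReal_Mphi hφ hω hθ hb hlam hlam₀
            (t := 2 * (‖x‖ + s)) (by positivity) (fun i => hu₀ i x)
            fun i => hlower (p i) C (b i) θ (hb i) (hb₀ i) hθ x
      _ < ∞ := hM φ hφ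
  simp_rw [mul_left_comm _ (ENNReal.ofReal c), ENNReal.tsum_mul_left] at hint
  exact (ENNReal.lt_top_of_mul_ne_top_right hint.ne (by simpa using hc)).ne

theorem weighted_lattice_part_general (hω : IsRadialWeight ω) (hs : 0 < s)
    (hθ : IsBumpAt 0 s C θ) (hb : ∀ i, IsBumpAt (p i) s C (b i))
    (hlam : Summable fun i => |lam i|) :
    ((Summable fun i => |lam i| * OmegaFun n ω ‖p i‖) →
      ∀ φ, IsTestFun n φ →
        ∫⁻ x, ENNReal.ofReal (Mphi n φ (bumpSeries lam b θ) x * ω x) < ∞) ∧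
    ((∀ i y, 0 ≤ b i y) → (∀ i, 0 ≤ lam i) →
      (∀ φ, IsTestFun n φ →
        ∫⁻ x, ENNReal.ofReal (Mphi n φ (bumpSeries lam b θ) x * ω x) < ∞) →
      Summable fun i => lam i * OmegaFun n ω ‖p i‖) :=
  ⟨fun hsum _ hφ => lintegral_Mphi_bumpSeries_lt_top hφ hω hs hθ hb hlam hsum,
    fun hb₀ hlam₀ hM =>
      summable_of_lintegral_Mphi_bumpSeries_lt_top hω hs hθ hb hb₀ hlam hlam₀ hM⟩

end Converse

section Lattice

variable {n : ℕ} {k : Fin n → ℤ} {x : En n}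

lemma Qk_eq_preimage (k : Fin n → ℤ) :
    Qk n k = WithLp.ofLp ⁻¹' univ.pi fun i => Ioo ((k i : ℝ) - 1 / 2) ((k i : ℝ) + 1 / 2) := by
  ext x
  simp [Qk]

lemma measurableSet_Qk (k : Fin n → ℤ) : MeasurableSet (Qk n k) := by
  rw [Qk_eq_preimage]
  exact (PiLp.volume_preserving_ofLp (Fin n)).measurable
    (.univ_pi fun _ => measurableSet_Ioo)

lemma volume_Qk (k : Fin n → ℤ) : volume (Qk n k) = 1 := by
  rw [Qk_eq_preimage, (PiLp.volume_preserving_ofLp (Fin n)).measure_preimage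
    (MeasurableSet.univ_pi fun _ => measurableSet_Ioo).nullMeasurableSet, Real.volume_pi_Ioo]
  norm_num

lemma norm_sub_zv_le_of_mem_Qk (hx : x ∈ Qk n k) : ‖x - zv n k‖ ≤ √n := by
  have hcoord (i : Fin n) : ‖(x - zv n k) i‖ ^ 2 ≤ 1 := by
    have hi : (x - zv n k) i = x i - k i := by simp [zv]
    rw [hi, Real.norm_eq_abs, sq_abs]
    nlinarith [hx i]
  rw [EuclideanSpace.norm_eq]
  refine Real.sqrt_le_sqrt ((Finset.sum_le_sum fun i _ => hcoord i).trans ?_)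
  simp

lemma unitQ_eq_Qk_zero (n : ℕ) : unitQ n = Qk n 0 := by
  ext x
  simp [unitQ, Qk]

lemma zv_zero (n : ℕ) : zv n 0 = 0 := by
  ext i
  simp [zv]

lemma isBumpAt_indicator_Qk (k : Fin n → ℤ) :
    IsBumpAt (zv n k) √n 1 ((Qk n k).indicator 1) where
  aestronglyMeasurable := (measurable_one.indicator (measurableSet_Qk k)).aestronglyMeasurable
  abs_le y := by by_cases hy : y ∈ Qk n k <;> simp [hy]
  eq_zero y hy := indicator_of_notMem (fun h => hy.not_ge (norm_sub_zv_le_of_mem_Qk h)) 1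
  integral_eq_one := by
    rw [integral_indicator_one (measurableSet_Qk k), measureReal_def, volume_Qk, ENNReal.toReal_one]

lemma isBumpAt_zero_of_unitQ {θ : En n → ℝ} {C : ℝ} (hmeas : Measurable θ)
    (hbdd : ∀ y, |θ y| ≤ C) (hsupp : ∀ y, y ∉ unitQ n → θ y = 0) (hint : ∫ y, θ y = 1) :
    IsBumpAt 0 √n C θ where
  aestronglyMeasurable := hmeas.aestronglyMeasurable
  abs_le := hbdd
  eq_zero y hy := hsupp y fun h => by
    rw [unitQ_eq_Qk_zero] at h
    rw [← zv_zero] at hy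
    exact hy.not_ge (norm_sub_zv_le_of_mem_Qk h)
  integral_eq_one := hint

end Lattice

/-- **Proposition (weighted Hardy space criterion for the lattice part).**
Let `ω` be radial nonincreasing with `∫ ω(x)/(1+|x|)^{n+1} dx < ∞`, and let
`g = ∑_j λ_j (χ_{Q_j} - θ)` with `∑_j |λ_j| < ∞`.
(i) If `∑_j |λ_j| Ω(|j|) < ∞` then `g ∈ H^1_ω(ℝ^n)`.
(ii) If the `λ_j` are nonnegative and `g ∈ H^1_ω(ℝ^n)`, then `∑_j λ_j Ω(|j|) < ∞`. -/
theorem weighted_lattice_part (n : ℕ) (hn : 1 ≤ n) (θ : En n → ℝ)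
    (hθmeas : Measurable θ) (hθbdd : ∃ C, ∀ x, |θ x| ≤ C)
    (hθsupp : ∀ x, x ∉ unitQ n → θ x = 0) (hθint : (∫ x, θ x) = 1)
    (ω : En n → ℝ) (hω0 : ∀ x, 0 ≤ ω x)
    (w : ℝ → ℝ) (hrad : ∀ x, ω x = w ‖x‖) (hmono : AntitoneOn w (Set.Ici 0))
    (hωint : ∫⁻ x, ENNReal.ofReal (ω x / (1 + ‖x‖) ^ (n + 1)) < ⊤)
    (lam : (Fin n → ℤ) → ℝ) (hlam : Summable (fun j => |lam j|))
    (g : En n → ℝ)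
    (hg : ∀ x, g x = ∑' j : Fin n → ℤ,
      lam j * ((Qk n j).indicator (1 : En n → ℝ) x - θ x)) :
    (Summable (fun j => |lam j| * OmegaFun n ω ‖zv n j‖) →
      ∀ φ : En n → ℝ, IsTestFun n φ →
        ∫⁻ x, ENNReal.ofReal (Mphi n φ g x * ω x) < ⊤) ∧
    ((∀ j, 0 ≤ lam j) →
      (∀ φ : En n → ℝ, IsTestFun n φ →
        ∫⁻ x, ENNReal.ofReal (Mphi n φ g x * ω x) < ⊤) →
      Summable (fun j => lam j * OmegaFun n ω ‖zv n j‖)) := by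
  obtain ⟨C, hC⟩ := hθbdd
  have hs : 0 < √(n : ℝ) := Real.sqrt_pos.2 (by exact_mod_cast hn)
  have hω : IsRadialWeight ω := .of_antitoneOn hω0 hrad hmono
  have hθ : IsBumpAt 0 √n (max 1 C) θ :=
    (isBumpAt_zero_of_unitQ hθmeas hC hθsupp hθint).mono (le_max_right 1 C)
  have hb (j : Fin n → ℤ) : IsBumpAt (zv n j) √n (max 1 C) ((Qk n j).indicator 1) :=
    (isBumpAt_indicator_Qk j).mono (le_max_left 1 C)
  obtain rfl : g = bumpSeries lam (fun j => (Qk n j).indicator 1) θ := funext hg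
  obtain ⟨hi, hii⟩ := weighted_lattice_part_general hω hs hθ hb hlam
  exact ⟨hi, hii fun j => indicator_nonneg fun _ _ => zero_le_one⟩
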